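/- Let p, q ∈ (1,∞) with 1/p + 1/q = 1, ℓ ∈ ℝ and ε ∈ (0,1]. For every measurable f : ℝ² → ℝ with ‖f‖_{L^p_ℓ(ℝ²)} < ∞ and every g : εℤ² → ℝ with ‖g‖_{L^q_{−ℓ}(εℤ²)} < ∞, both sides of the following identity are absolutely convergent and ∫_{ℝ²} f(x)·E^ε g(x) dx = ε² Σ_{z∈εℤ²} D^ε f(z)·g(z). -/

import Mathlib

open MeasureTheory
open scoped ENNReal

/-- The polynomial weight `ρ_ℓ(y) = (1+|y|²)^{-ℓ/2}` on `ℝ²`. -/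
noncomputable def rho2 (ℓ : ℝ) (y : ℝ × ℝ) : ℝ := (1 + y.1 ^ 2 + y.2 ^ 2) ^ (-ℓ / 2)

/-- The lattice point `(εn₁, εn₂) ∈ εℤ² ⊂ ℝ²` indexed by `n ∈ ℤ²`. -/
noncomputable def pt (ε : ℝ) (n : ℤ × ℤ) : ℝ × ℝ := (ε * (n.1 : ℝ), ε * (n.2 : ℝ))

/-- The square `Q_ε(z) = (z₁-ε/2, z₁+ε/2] × (z₂-ε/2, z₂+ε/2]`. -/
def Qeps (ε : ℝ) (z : ℝ × ℝ) : Set (ℝ × ℝ) :=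
  Set.Ioc (z.1 - ε / 2) (z.1 + ε / 2) ×ˢ Set.Ioc (z.2 - ε / 2) (z.2 + ε / 2)

/-- The discretization operator `D^ε f(z) = ε⁻² ∫_{Q_ε(z)} f(x) dx`. -/
noncomputable def Deps (ε : ℝ) (f : ℝ × ℝ → ℝ) (n : ℤ × ℤ) : ℝ :=
  (ε ^ 2)⁻¹ * ∫ x in Qeps ε (pt ε n), f x

/-- The index of the cell `Q_ε(z)` containing `t` in one coordinate:
`t ∈ (εn - ε/2, εn + ε/2]` iff `n = ⌈t/ε - 1/2⌉`. -/
noncomputable def cellIdx (ε t : ℝ) : ℤ := ⌈t / ε - 1 / 2⌉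

/-- The extension operator `E^ε`, producing the piecewise constant function with
`E^ε f = f(z)` on `Q_ε(z)`. -/
noncomputable def Eeps (ε : ℝ) (f : ℤ × ℤ → ℝ) (x : ℝ × ℝ) : ℝ :=
  f (cellIdx ε x.1, cellIdx ε x.2)

/-- The weighted norm `‖g‖_{L^p_ℓ(ℝ²)} = (∫_{ℝ²} |ρ_ℓ(x) g(x)|^p dx)^{1/p}`,
valued in `ℝ≥0∞`. -/
noncomputable def lpNormR2 (p ℓ : ℝ) (g : ℝ × ℝ → ℝ) : ℝ≥0∞ :=
  (∫⁻ x : ℝ × ℝ, ENNReal.ofReal (|rho2 ℓ x * g x| ^ p)) ^ (1 / p)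

/-- The weighted lattice norm `‖f‖_{L^p_ℓ(εℤ²)} = (ε² Σ_{z∈εℤ²} |ρ_ℓ(z) f(z)|^p)^{1/p}`,
valued in `ℝ≥0∞`. -/
noncomputable def lpNormLat (p ℓ ε : ℝ) (f : ℤ × ℤ → ℝ) : ℝ≥0∞ :=
  (ENNReal.ofReal (ε ^ 2) *
    ∑' n : ℤ × ℤ, ENNReal.ofReal (|rho2 ℓ (pt ε n) * f n| ^ p)) ^ (1 / p)

/-- The Euclidean length of a point of `ℝ²`. -/
noncomputable def en2 (y : ℝ × ℝ) : ℝ := Real.sqrt (y.1 ^ 2 + y.2 ^ 2)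

/-- The weighted lattice `L^p_ℓ` norm of the difference `f(·+k) − f`. -/
noncomputable def latDiffNorm (p ℓ ε : ℝ) (f : ℤ × ℤ → ℝ) (k : ℤ × ℤ) : ℝ≥0∞ :=
  (ENNReal.ofReal (ε ^ 2) *
    ∑' n : ℤ × ℤ, ENNReal.ofReal (rho2 ℓ (pt ε n) ^ p * |f (n + k) - f n| ^ p)) ^ (1 / p)

/-- The lattice fractional Sobolev norm `‖f‖_{W^{s,p}_ℓ(εℤ²)} = ‖f‖_{L^p_ℓ(εℤ²)} +
sup{ |k|^{-s} ‖f(·+k) − f‖_{L^p_ℓ(εℤ²)} : k ∈ εℤ², 0 < |k| ≤ 1 }`. -/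
noncomputable def latWNorm (s p ℓ ε : ℝ) (f : ℤ × ℤ → ℝ) : ℝ≥0∞ :=
  lpNormLat p ℓ ε f +
    ⨆ (k : ℤ × ℤ) (_ : 0 < en2 (pt ε k) ∧ en2 (pt ε k) ≤ 1),
      ENNReal.ofReal (en2 (pt ε k) ^ (-s)) * latDiffNorm p ℓ ε f k

/-- The difference-quotient norm of the weighted Besov space `B^s_{p,∞,ℓ}(ℝ²)`:
`‖g‖_{L^p_ℓ} + sup{ |h|^{-s} ‖g(·+h) − g‖_{L^p_ℓ} : h ∈ ℝ², 0 < |h| ≤ 1 }`. -/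
noncomputable def besovDiffNormR2 (s p ℓ : ℝ) (g : ℝ × ℝ → ℝ) : ℝ≥0∞ :=
  lpNormR2 p ℓ g +
    ⨆ (h : ℝ × ℝ) (_ : 0 < en2 h ∧ en2 h ≤ 1),
      ENNReal.ofReal (en2 h ^ (-s)) * lpNormR2 p ℓ (fun x => g (x + h) - g x)

theorem aux_mem_cell (ε : ℝ) (hε : 0 < ε) (t : ℝ) (n : ℤ) :
    t ∈ Set.Ioc (ε * (n : ℝ) - ε / 2) (ε * (n : ℝ) + ε / 2) ↔ cellIdx ε t = n := by
  have h : t / ε * ε = t := div_mul_cancel₀ t hε.ne'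
  rw [cellIdx, Int.ceil_eq_iff, Set.mem_Ioc]
  generalize t / ε = s at h
  subst h
  constructor
  · rintro ⟨h1, h2⟩
    constructor
    · by_contra hc
      nlinarith
    · by_contra hc
      nlinarith
  · rintro ⟨h1, h2⟩
    constructor <;> nlinarith

theorem aux_mem_Q (ε : ℝ) (hε : 0 < ε) (x : ℝ × ℝ) (n : ℤ × ℤ) :
    x ∈ Qeps ε (pt ε n) ↔ (cellIdx ε x.1, cellIdx ε x.2) = n := by
  rw [Qeps, Set.mem_prod, pt]
  simp only
  rw [aux_mem_cell ε hε, aux_mem_cell ε hε, Prod.ext_iff]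

theorem aux_meas_Q (ε : ℝ) (z : ℝ × ℝ) : MeasurableSet (Qeps ε z) :=
  measurableSet_Ioc.prod measurableSet_Ioc

theorem aux_iUnion_Q (ε : ℝ) (hε : 0 < ε) : ⋃ n, Qeps ε (pt ε n) = Set.univ := by
  ext x
  simp [aux_mem_Q ε hε]

theorem aux_disj_Q (ε : ℝ) (hε : 0 < ε) :
    Pairwise (Function.onFun Disjoint fun n => Qeps ε (pt ε n)) := by
  intro m n hmn
  rw [Function.onFun, Set.disjoint_left]
  intro x hx hy
  rw [aux_mem_Q ε hε] at hx hy
  exact hmn (hx.symm.trans hy)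

theorem aux_vol_Q (ε : ℝ) (hε : 0 < ε) (z : ℝ × ℝ) :
    volume (Qeps ε z) = ENNReal.ofReal (ε ^ 2) := by
  rw [Qeps, Measure.volume_eq_prod, Measure.prod_prod, Real.volume_Ioc, Real.volume_Ioc,
    ← ENNReal.ofReal_mul (by linarith)]
  congr 1
  ring

theorem aux_rho_pos (m : ℝ) (x : ℝ × ℝ) : 0 < rho2 m x :=
  Real.rpow_pos_of_pos (by positivity) _

theorem aux_rho_mul (m : ℝ) (x : ℝ × ℝ) : rho2 m x * rho2 (-m) x = 1 := by
  rw [rho2, rho2, ← Real.rpow_add (by positivity)]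
  have : -m / 2 + - -m / 2 = 0 := by ring
  rw [this, Real.rpow_zero]

theorem aux_pow_cmp (a b s : ℝ) (ha : 0 < a) (hb : 0 < b) (h1 : a ≤ 2 * b) (h2 : b ≤ 2 * a) :
    a ^ s ≤ 2 ^ |s| * b ^ s := by
  rcases le_total 0 s with hs | hs
  · rw [abs_of_nonneg hs, ← Real.mul_rpow (by norm_num) hb.le]
    exact Real.rpow_le_rpow ha.le h1 hs
  · rw [abs_of_nonpos hs]
    have h3 : (2 * a) ^ s ≤ b ^ s := Real.rpow_le_rpow_of_nonpos hb h2 hs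
    rw [Real.mul_rpow (by norm_num) ha.le] at h3
    calc a ^ s = 2 ^ (-s) * (2 ^ s * a ^ s) := by
          rw [← mul_assoc, ← Real.rpow_add (by norm_num)]; simp
      _ ≤ _ := by gcongr

theorem aux_sq (ε t z : ℝ) (hε : 0 < ε) (hε1 : ε ≤ 1)
    (h : t ∈ Set.Ioc (z - ε / 2) (z + ε / 2)) : (t - z) ^ 2 ≤ 1 / 4 := by
  obtain ⟨h1, h2⟩ := h
  nlinarith

theorem aux_rho_cmp (ε m : ℝ) (hε : 0 < ε) (hε1 : ε ≤ 1) (x z : ℝ × ℝ) (hx : x ∈ Qeps ε z) :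
    rho2 m x ≤ 2 ^ |-m / 2| * rho2 m z := by
  have h1 := aux_sq ε _ _ hε hε1 hx.1
  have h2 := aux_sq ε _ _ hε hε1 hx.2
  apply aux_pow_cmp _ _ _ (by positivity) (by positivity)
  · nlinarith [sq_nonneg (x.1 - 2 * z.1), sq_nonneg (x.2 - 2 * z.2)]
  · nlinarith [sq_nonneg (z.1 - 2 * x.1), sq_nonneg (z.2 - 2 * x.2)]

theorem aux_meas_rho (m : ℝ) : Measurable (rho2 m) := by
  unfold rho2
  fun_prop

theorem aux_meas_E (ε : ℝ) (g : ℤ × ℤ → ℝ) : Measurable (Eeps ε g) := by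
  unfold Eeps cellIdx
  exact (measurable_of_countable g).comp (by fun_prop)

theorem aux_int_E (q m ε : ℝ) (hq : 1 < q) (hε : 0 < ε) (hε1 : ε ≤ 1)
    (g : ℤ × ℤ → ℝ) (hg : lpNormLat q m ε g < ⊤) :
    ∫⁻ x : ℝ × ℝ, ENNReal.ofReal (|rho2 m x * Eeps ε g x| ^ q) < ⊤ := by
  rw [lpNormLat, ENNReal.rpow_lt_top_iff_of_pos (by positivity)] at hg
  rw [← setLIntegral_univ, ← aux_iUnion_Q ε hε,
    lintegral_iUnion (fun n => aux_meas_Q ε _) (aux_disj_Q ε hε)]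
  set K : ℝ := 2 ^ |-m / 2| with hK
  have hK0 : 0 ≤ K := by positivity
  have key : ∀ n, ∫⁻ x in Qeps ε (pt ε n), ENNReal.ofReal (|rho2 m x * Eeps ε g x| ^ q) ≤
      ENNReal.ofReal (K ^ q) * (ENNReal.ofReal (ε ^ 2) *
        ENNReal.ofReal (|rho2 m (pt ε n) * g n| ^ q)) := by
    intro n
    calc _ ≤ ∫⁻ x in Qeps ε (pt ε n), ENNReal.ofReal (K ^ q) *
            ENNReal.ofReal (|rho2 m (pt ε n) * g n| ^ q) := by
          apply setLIntegral_mono measurable_const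
          intro x hx
          have hE : Eeps ε g x = g n := by
            rw [Eeps, (aux_mem_Q ε hε x n).1 hx]
          rw [hE, ← ENNReal.ofReal_mul (by positivity), ← Real.mul_rpow hK0 (abs_nonneg _)]
          apply ENNReal.ofReal_le_ofReal
          apply Real.rpow_le_rpow (abs_nonneg _) _ (by linarith)
          rw [abs_mul, abs_mul, abs_of_pos (aux_rho_pos _ _), abs_of_pos (aux_rho_pos _ _),
            ← mul_assoc]
          exact mul_le_mul_of_nonneg_right (aux_rho_cmp ε m hε hε1 x _ hx) (abs_nonneg _)
      _ = _ := by
          rw [setLIntegral_const, aux_vol_Q ε hε]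
          ring
  refine (ENNReal.tsum_le_tsum key).trans_lt ?_
  rw [ENNReal.tsum_mul_left, ENNReal.tsum_mul_left]
  exact ENNReal.mul_lt_top ENNReal.ofReal_lt_top hg

theorem aux_integrable (F : ℝ × ℝ → ℝ) (p : ℝ) (hF : Measurable F)
    (h : ∫⁻ x : ℝ × ℝ, ENNReal.ofReal (|F x| ^ p) < ⊤) :
    Integrable (fun x => |F x| ^ p) := by
  refine ⟨(by fun_prop : Measurable fun x => |F x| ^ p).aestronglyMeasurable, ?_⟩
  rw [hasFiniteIntegral_iff_ofReal (Filter.Eventually.of_forall fun x => by positivity)]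
  exact h

/-- Lemma 2.22 (duality identity): for `p, q ∈ (1,∞)` conjugate, `ℓ ∈ ℝ`, `ε ∈ (0,1]`,
`f ∈ L^p_ℓ(ℝ²)` and `g ∈ L^q_{-ℓ}(εℤ²)`, both sides are absolutely convergent and
`∫_{ℝ²} f(x) E^ε g(x) dx = ε² Σ_{z∈εℤ²} D^ε f(z) g(z)`. -/
theorem stmt_7 (p q ℓ : ℝ) (hp : 1 < p) (hq : 1 < q) (hpq : 1 / p + 1 / q = 1)
    (ε : ℝ) (hε : ε ∈ Set.Ioc (0 : ℝ) 1)
    (f : ℝ × ℝ → ℝ) (hf : Measurable f) (hfp : lpNormR2 p ℓ f < ⊤)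
    (g : ℤ × ℤ → ℝ) (hg : lpNormLat q (-ℓ) ε g < ⊤) :
    Integrable (fun x : ℝ × ℝ => f x * Eeps ε g x) ∧
      Summable (fun n : ℤ × ℤ => Deps ε f n * g n) ∧
      ∫ x : ℝ × ℝ, f x * Eeps ε g x = ε ^ 2 * ∑' n : ℤ × ℤ, Deps ε f n * g n := by
  obtain ⟨hε0, hε1⟩ := hε
  have hconj : p.HolderConjugate q := by
    rw [Real.holderConjugate_iff]
    exact ⟨hp, by simpa using hpq⟩
  have hint : Integrable (fun x : ℝ × ℝ => f x * Eeps ε g x) := by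
    rw [lpNormR2, ENNReal.rpow_lt_top_iff_of_pos (by positivity)] at hfp
    have m1 : Measurable fun x => rho2 ℓ x * f x := (aux_meas_rho ℓ).mul hf
    have m2 : Measurable fun x => rho2 (-ℓ) x * Eeps ε g x :=
      (aux_meas_rho (-ℓ)).mul (aux_meas_E ε g)
    have i1 := aux_integrable _ p m1 hfp
    have i2 := aux_integrable _ q m2 (aux_int_E q (-ℓ) ε hq hε0 hε1 g hg)
    refine ((i1.div_const p).add (i2.div_const q)).mono'
      (hf.mul (aux_meas_E ε g)).aestronglyMeasurable (Filter.Eventually.of_forall fun x => ?_)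
    have e : f x * Eeps ε g x = (rho2 ℓ x * f x) * (rho2 (-ℓ) x * Eeps ε g x) := by
      linear_combination (-(f x * Eeps ε g x)) * aux_rho_mul ℓ x
    rw [e, Real.norm_eq_abs, abs_mul]
    exact Real.young_inequality_of_nonneg (abs_nonneg _) (abs_nonneg _) hconj
  have hs := hasSum_integral_iUnion (μ := volume) (f := fun x : ℝ × ℝ => f x * Eeps ε g x)
    (fun n => aux_meas_Q ε (pt ε n)) (aux_disj_Q ε hε0) hint.integrableOn
  rw [aux_iUnion_Q ε hε0, setIntegral_univ] at hs
  have hcell : ∀ n : ℤ × ℤ, ∫ x in Qeps ε (pt ε n), f x * Eeps ε g x =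
      ε ^ 2 * (Deps ε f n * g n) := by
    intro n
    have h1 : ∫ x in Qeps ε (pt ε n), f x * Eeps ε g x = ∫ x in Qeps ε (pt ε n), f x * g n := by
      apply setIntegral_congr_fun (aux_meas_Q ε _)
      intro x hx
      simp only [Eeps, (aux_mem_Q ε hε0 x n).1 hx]
    rw [h1, integral_mul_const, Deps]
    field_simp
  simp only [hcell] at hs
  have hne : ε ^ 2 ≠ 0 := by positivity
  refine ⟨hint, (summable_mul_left_iff hne).1 hs.summable, ?_⟩
  rw [← hs.tsum_eq, tsum_mul_left]
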